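/- Let n ≥ 1 be a natural number and set β̃_{1,n} = (2π(2n−1)(2n+1)/T) · cot((2n−1)π/(2(2n+1))). Then for every ε > 0 there exists a ∈ Λ̃_n such that ∫_0^T |a(x) − λ̃_{2n−1}| dx < β̃_{1,n} + ε. Consequently inf_{a ∈ Λ̃_n} ‖a − λ̃_{2n−1}‖_{L¹(0,T)} = β̃_{1,n}. -/

import Mathlib

open MeasureTheory Set Real

/-- `u` is a solution of `u'' + a·u = 0` on `[c,d]`, with derivative function `v`. -/
def IsSolOn (a u v : ℝ → ℝ) (c d : ℝ) : Prop :=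
  (∀ x ∈ Set.Icc c d, HasDerivWithinAt u (v x) (Set.Icc c d) x) ∧
  (∀ x ∈ Set.Icc c d, v x = v c - ∫ t in c..x, a t * u t)

/-- Membership in `L_T`: measurable, `T`-periodic and integrable on `[0,T]`. -/
def MemLT (T : ℝ) (a : ℝ → ℝ) : Prop :=
  Measurable a ∧ (∀ x, a (x + T) = a x) ∧ IntegrableOn a (Set.Icc 0 T)

/-- `c ≺ d` : `c ≤ d` a.e. on `[0,T]` and `c < d` on a set of positive measure. -/
def Prec (T : ℝ) (c d : ℝ → ℝ) : Prop :=
  (∀ᵐ x ∂(volume.restrict (Set.Icc 0 T)), c x ≤ d x) ∧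
  0 < volume {x ∈ Set.Icc 0 T | c x < d x}

/-- `(u,v)` solves the periodic problem `u'' + a u = 0`, `u(0)=u(T)`, `u'(0)=u'(T)`. -/
def PeriodicSol (T : ℝ) (a u v : ℝ → ℝ) : Prop :=
  IsSolOn a u v 0 T ∧ u 0 = u T ∧ v 0 = v T

/-- `(u,v)` solves the antiperiodic problem `u'' + a u = 0`, `u(0)+u(T)=0`, `u'(0)+u'(T)=0`. -/
def AntiperiodicSol (T : ℝ) (a u v : ℝ → ℝ) : Prop :=
  IsSolOn a u v 0 T ∧ u 0 + u T = 0 ∧ v 0 + v T = 0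

/-- The `(2n-1)`-st periodic eigenvalue `λ_{2n-1} = 4 n² π² / T²`. -/
noncomputable def lam (T : ℝ) (n : ℕ) : ℝ := 4 * (n : ℝ) ^ 2 * Real.pi ^ 2 / T ^ 2

/-- The `(2n-1)`-st antiperiodic eigenvalue `λ̃_{2n-1} = (2n-1)² π² / T²`. -/
noncomputable def lamT (T : ℝ) (n : ℕ) : ℝ := (2 * (n : ℝ) - 1) ^ 2 * Real.pi ^ 2 / T ^ 2

/-- The set `Λ_n`. -/
def LambdaN (T : ℝ) (n : ℕ) : Set (ℝ → ℝ) :=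
  {a | MemLT T a ∧ Prec T (fun _ => lam T n) a ∧
    ∃ u v : ℝ → ℝ, PeriodicSol T a u v ∧ ∃ x ∈ Set.Icc 0 T, u x ≠ 0}

/-- The set `Λ̃_n`. -/
def LambdaTildeN (T : ℝ) (n : ℕ) : Set (ℝ → ℝ) :=
  {a | MemLT T a ∧ Prec T (fun _ => lamT T n) a ∧
    ∃ u v : ℝ → ℝ, AntiperiodicSol T a u v ∧ ∃ x ∈ Set.Icc 0 T, u x ≠ 0}

/-- The constant `β_{1,n}` of the periodic `L¹` Lyapunov inequality. -/
noncomputable def beta1 (T : ℝ) (n : ℕ) : ℝ :=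
  8 * Real.pi * (n : ℝ) * ((n : ℝ) + 1) / T * Real.cot ((n : ℝ) * Real.pi / (2 * ((n : ℝ) + 1)))

/-- The constant `β̃_{1,n}` of the antiperiodic `L¹` Lyapunov inequality. -/
noncomputable def betaT1 (T : ℝ) (n : ℕ) : ℝ :=
  2 * Real.pi * (2 * (n : ℝ) - 1) * (2 * (n : ℝ) + 1) / T *
    Real.cot ((2 * (n : ℝ) - 1) * Real.pi / (2 * (2 * (n : ℝ) + 1)))

/-!
Let `a ≥ ω²`, let `u'' + au = 0` and put `z = u' + iωu`. Then `z' = wz` with `w` integrable, so `z`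
has an absolutely continuous argument, the Prüfer angle `θ`, with
`θ' = ω + (a - ω²) sin² θ / ω`. If `z(T) = (-1)^m z(0)` and `(m - 2)π ≤ ωT`, then `θ`, which gains
more than `ωT` over `[0, T]` and an amount congruent to `mπ` modulo `2π`, gains at least `mπ`.
Suppose also `ωT < mπ`, put `α = ωT / (2m)` and multiply the equation for `θ` by `g(θ)`, where
`g = 1 / max(sin², sin² α)`: the right-hand side is at most `(a - ω²) / ω + ω / sin² α`, while the
left-hand side integrates to at least `m ∫₀^π g`. Comparing the two gives
`∫ (a - ω²) ≥ 2mω cot α`.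

For sharpness, `a - ω²` is concentrated in `m` equally spaced narrow pulses at the maxima of `|u|`,
each reversing the slope of a sine of frequency `ω`. Antiperiodic solutions are the case
`m = 2n + 1`, `ωT = (2n - 1)π`.
-/

open Filter Topology intervalIntegral

section AbsolutelyContinuous

variable {c d : ℝ}

theorem absolutelyContinuousOnInterval_of_dist_le {X Y : Type*} [PseudoMetricSpace X]
    [PseudoMetricSpace Y] {f : ℝ → X} {g : ℝ → Y} (K : ℝ)
    (hg : AbsolutelyContinuousOnInterval g c d)
    (hfg : ∀ x ∈ uIcc c d, ∀ y ∈ uIcc c d, dist (f x) (f y) ≤ K * dist (g x) (g y)) :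
    AbsolutelyContinuousOnInterval f c d := by
  have hK := Tendsto.const_mul K hg
  rw [mul_zero] at hK
  refine squeeze_zero' (.of_forall fun _ => Finset.sum_nonneg fun _ _ => dist_nonneg) ?_ hK
  filter_upwards [mem_inf_of_right (mem_principal_self _)] with I hI
  rw [Finset.mul_sum]
  exact Finset.sum_le_sum fun i hi => hfg _ (hI.1 i hi).1 _ (hI.1 i hi).2

theorem absolutelyContinuousOnInterval_comp_of_locallyLipschitz {X Y : Type*}
    [SeminormedAddCommGroup X] [PseudoMetricSpace Y] {f : ℝ → X} {φ : X → Y}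
    (hφ : LocallyLipschitz φ) (hf : AbsolutelyContinuousOnInterval f c d) :
    AbsolutelyContinuousOnInterval (φ ∘ f) c d := by
  obtain ⟨K, hK⟩ := LocallyLipschitzOn.exists_lipschitzOnWith_of_compact
    (isCompact_uIcc.image_of_continuousOn hf.continuousOn) hφ.locallyLipschitzOn
  exact absolutelyContinuousOnInterval_of_dist_le K hf fun x hx y hy =>
    hK.dist_le_mul _ (mem_image_of_mem f hx) _ (mem_image_of_mem f hy)

theorem absolutelyContinuousOnInterval_integral {E : Type*} [NormedAddCommGroup E]
    [NormedSpace ℝ E] {f : ℝ → E} (hf : IntervalIntegrable f volume c d) :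
    AbsolutelyContinuousOnInterval (fun x => ∫ t in c..x, f t) c d := by
  refine absolutelyContinuousOnInterval_of_dist_le 1
    (hf.norm.absolutelyContinuousOnInterval_intervalIntegral left_mem_uIcc)
    fun x hx y hy => ?_
  have hcx := hf.mono_set (uIcc_subset_uIcc_left hx)
  have hcy := hf.mono_set (uIcc_subset_uIcc_left hy)
  rw [one_mul, dist_comm, dist_comm (∫ t in c..x, ‖f t‖), dist_eq_norm, dist_eq_norm,
    integral_interval_sub_left hcy hcx, integral_interval_sub_left hcy.norm hcx.norm]
  exact norm_integral_le_abs_integral_norm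

/-- `f` is absolutely continuous on the interval between `c` and `d`, with derivative `f'` almost
everywhere there. As opposed to using `deriv f`, this allows `f'` to be prescribed by a
differential equation in the sense of Carathéodory. -/
def HasACDeriv {E : Type*} [NormedAddCommGroup E] [NormedSpace ℝ E] (f f' : ℝ → E) (c d : ℝ) :
    Prop :=
  AbsolutelyContinuousOnInterval f c d ∧ ∀ᵐ x, x ∈ uIcc c d → HasDerivAt f (f' x) x

namespace HasACDeriv

variable {E F 𝕜 : Type*} [NormedAddCommGroup E] [NormedSpace ℝ E] [NormedAddCommGroup F]
  [NormedSpace ℝ F] [NormedField 𝕜] [NormedAlgebra ℝ 𝕜]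

theorem continuousOn {f f' : ℝ → E} (hf : HasACDeriv f f' c d) : ContinuousOn f (uIcc c d) :=
  hf.1.continuousOn

theorem mono {f f' : ℝ → E} {x y : ℝ} (hf : HasACDeriv f f' c d) (h : uIcc x y ⊆ uIcc c d) :
    HasACDeriv f f' x y :=
  ⟨hf.1.mono h, hf.2.mono fun _ ht htI => ht (h htI)⟩

theorem congr_deriv {f f' g' : ℝ → E} (hf : HasACDeriv f f' c d)
    (h : ∀ᵐ x, x ∈ uIcc c d → f' x = g' x) : HasACDeriv f g' c d := by
  refine ⟨hf.1, ?_⟩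
  filter_upwards [hf.2, h] with x hfx hx hxI
  exact hx hxI ▸ hfx hxI

theorem congr {f f' g : ℝ → E} (hf : HasACDeriv f f' c d) (h : EqOn g f (uIcc c d)) :
    HasACDeriv g f' c d := by
  refine ⟨absolutelyContinuousOnInterval_of_dist_le 1 hf.1 fun x hx y hy => by
    rw [h hx, h hy, one_mul], ?_⟩
  filter_upwards [hf.2, (Ioo_ae_eq_Icc (a := min c d) (b := max c d)).mem_iff] with x hfx hxI hx
  exact (hfx hx).congr_of_eventuallyEq (h.eventuallyEq_of_mem (Icc_mem_nhds_iff.2 (hxI.2 hx)))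

theorem of_hasDerivWithinAt {f f' : ℝ → E} (hf' : ContinuousOn f' (uIcc c d))
    (hf : ∀ x ∈ uIcc c d, HasDerivWithinAt f (f' x) (uIcc c d) x) : HasACDeriv f f' c d := by
  obtain ⟨C, hC⟩ := isCompact_uIcc.exists_bound_of_continuousOn hf'
  have hlip : LipschitzOnWith C.toNNReal f (uIcc c d) :=
    (convex_uIcc c d).lipschitzOnWith_of_nnnorm_hasDerivWithin_le hf fun x hx =>
      NNReal.le_toNNReal_of_coe_le (hC x hx)
  refine ⟨hlip.absolutelyContinuousOnInterval, ?_⟩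
  filter_upwards [(Ioo_ae_eq_Icc (a := min c d) (b := max c d)).mem_iff] with x hxI hx
  exact (hf x hx).hasDerivAt (Icc_mem_nhds_iff.2 (hxI.2 hx))

theorem add {f f' g g' : ℝ → E} (hf : HasACDeriv f f' c d) (hg : HasACDeriv g g' c d) :
    HasACDeriv (fun x => f x + g x) (fun x => f' x + g' x) c d := by
  refine ⟨hf.1.fun_add hg.1, ?_⟩
  filter_upwards [hf.2, hg.2] with x hfx hgx hx
  exact (hfx hx).add (hgx hx)

theorem const_add {f f' : ℝ → E} (e : E) (hf : HasACDeriv f f' c d) :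
    HasACDeriv (fun x => e + f x) f' c d := by
  refine ⟨absolutelyContinuousOnInterval_of_dist_le 1 hf.1 fun x _ y _ => by simp, ?_⟩
  filter_upwards [hf.2] with x hfx hx
  exact (hfx hx).const_add e

theorem mul {f f' g g' : ℝ → 𝕜} (hf : HasACDeriv f f' c d) (hg : HasACDeriv g g' c d) :
    HasACDeriv (fun x => f x * g x) (fun x => f' x * g x + f x * g' x) c d := by
  refine ⟨hf.1.fun_smul hg.1, ?_⟩
  filter_upwards [hf.2, hg.2] with x hfx hgx hx
  exact (hfx hx).mul (hgx hx)

theorem comp {f f' : ℝ → E} {φ : E → F} {φ' : E → E →L[ℝ] F} (hφ : LocallyLipschitz φ)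
    (hφ' : ∀ y, HasFDerivAt φ (φ' y) y) (hf : HasACDeriv f f' c d) :
    HasACDeriv (fun x => φ (f x)) (fun x => φ' (f x) (f' x)) c d := by
  refine ⟨absolutelyContinuousOnInterval_comp_of_locallyLipschitz hφ hf.1, ?_⟩
  filter_upwards [hf.2] with x hfx hx
  exact (hφ' (f x)).comp_hasDerivAt x (hfx hx)

theorem clm_comp (L : E →L[ℝ] F) {f f' : ℝ → E} (hf : HasACDeriv f f' c d) :
    HasACDeriv (fun x => L (f x)) (fun x => L (f' x)) c d :=
  hf.comp L.lipschitz.locallyLipschitz fun _ => L.hasFDerivAt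

theorem cexp {f f' : ℝ → ℂ} (hf : HasACDeriv f f' c d) :
    HasACDeriv (fun x => Complex.exp (f x)) (fun x => Complex.exp (f x) * f' x) c d :=
  (hf.comp (Complex.contDiff_exp (𝕜 := ℝ) (n := 1)).locallyLipschitz
    fun y => (Complex.hasDerivAt_exp y).hasFDerivAt.restrictScalars ℝ).congr_deriv
      (.of_forall fun x _ => by simp [mul_comm])

theorem integral [CompleteSpace E] {f : ℝ → E} (hf : IntervalIntegrable f volume c d) :
    HasACDeriv (fun x => ∫ t in c..x, f t) f c d := by
  refine ⟨absolutelyContinuousOnInterval_integral hf, ?_⟩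
  filter_upwards [hf.ae_hasDerivAt_integral] with x hfx hx
  exact hfx hx c left_mem_uIcc

theorem eq_of_deriv_eq_zero {f : ℝ → E} (hf : HasACDeriv f (fun _ => 0) c d) {x : ℝ}
    (hx : x ∈ uIcc c d) : f x = f c := by
  obtain ⟨e, he⟩ := hf.1.const_of_ae_hasDerivAt_zero hf.2
  rw [he x hx, he c left_mem_uIcc]

theorem eq_mul_exp_integral {f w : ℝ → ℂ} (hw : IntervalIntegrable w volume c d)
    (hf : HasACDeriv f (fun x => w x * f x) c d) {x : ℝ} (hx : x ∈ uIcc c d) :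
    f x = f c * Complex.exp (∫ t in c..x, w t) := by
  have hneg := ((integral hw).clm_comp (-ContinuousLinearMap.id ℝ ℂ)).cexp
  have hconst := ((hf.mul hneg).congr_deriv (g' := fun _ => 0)
    (.of_forall fun t _ => by
      simp only [neg_apply, ContinuousLinearMap.id_apply, mul_neg]
      ring)).eq_of_deriv_eq_zero hx
  simp only [neg_apply, ContinuousLinearMap.id_apply, integral_same, neg_zero, Complex.exp_zero,
    mul_one] at hconst
  rw [← hconst, mul_assoc, ← Complex.exp_add, neg_add_cancel, Complex.exp_zero, mul_one]

theorem deriv_ae_eq {f f' : ℝ → E} (hf : HasACDeriv f f' c d) :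
    deriv f =ᵐ[volume.restrict (uIoc c d)] f' := by
  refine (ae_restrict_iff' measurableSet_uIoc).2 ?_
  filter_upwards [hf.2] with x hfx hx
  exact (hfx (uIoc_subset_uIcc hx)).deriv

theorem intervalIntegrable {f f' : ℝ → ℝ} (hf : HasACDeriv f f' c d) :
    IntervalIntegrable f' volume c d :=
  hf.1.intervalIntegrable_deriv.congr_ae hf.deriv_ae_eq

theorem integral_eq_sub {f f' : ℝ → ℝ} (hf : HasACDeriv f f' c d) :
    ∫ x in c..d, f' x = f d - f c := by
  rw [← hf.1.integral_deriv_eq_sub]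
  exact (integral_congr_ae_restrict hf.deriv_ae_eq).symm

theorem strictMonoOn {f f' : ℝ → ℝ} {K : ℝ} (hK : 0 < K) (hf : HasACDeriv f f' c d)
    (hf' : ∀ᵐ x, x ∈ uIcc c d → K ≤ f' x) : StrictMonoOn f (uIcc c d) := by
  intro x hx y hy hxy
  have hsub : uIcc x y ⊆ uIcc c d := uIcc_subset_uIcc hx hy
  have hfxy := hf.mono hsub
  have hle : ∫ _ in x..y, K ≤ ∫ t in x..y, f' t := by
    refine integral_mono_ae_restrict hxy.le intervalIntegrable_const hfxy.intervalIntegrable ?_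
    refine (ae_restrict_iff' measurableSet_Icc).2 ?_
    filter_upwards [hf'] with t ht htI
    exact ht (hsub (Icc_subset_uIcc htI))
  rw [hfxy.integral_eq_sub, intervalIntegral.integral_const, smul_eq_mul] at hle
  linarith [mul_pos (sub_pos.2 hxy) hK]

end HasACDeriv

end AbsolutelyContinuous

section Prufer

variable {a u v : ℝ → ℝ} {c d ω : ℝ}

namespace IsSolOn

theorem continuousOn_fst (h : IsSolOn a u v c d) : ContinuousOn u (Icc c d) :=
  fun x hx => (h.1 x hx).continuousWithinAt

theorem hasACDeriv_snd (hcd : c ≤ d) (ha : IntervalIntegrable a volume c d)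
    (h : IsSolOn a u v c d) : HasACDeriv v (fun x => -(a x * u x)) c d := by
  have hau : IntervalIntegrable (fun x => -(a x * u x)) volume c d :=
    (ha.mul_continuousOn (uIcc_of_le hcd ▸ h.continuousOn_fst)).neg
  refine ((HasACDeriv.integral hau).const_add (v c)).congr fun x hx => ?_
  simp only [h.2 x (uIcc_of_le hcd ▸ hx), intervalIntegral.integral_neg, sub_eq_add_neg]

theorem hasACDeriv_fst (hcd : c ≤ d) (ha : IntervalIntegrable a volume c d)
    (h : IsSolOn a u v c d) : HasACDeriv u v c d :=
  .of_hasDerivWithinAt (h.hasACDeriv_snd hcd ha).continuousOn (uIcc_of_le hcd ▸ h.1)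

end IsSolOn

/-- The phase vector `u' + iωu` of a solution `u` with derivative `v`, scaled so that it rotates at
constant speed `ω` when `u'' + ω²u = 0`. -/
noncomputable def phase (ω : ℝ) (u v : ℝ → ℝ) (x : ℝ) : ℂ := v x + u x * (ω * Complex.I)

/-- The logarithmic derivative of the phase vector of a solution of `u'' + au = 0`; where the phase
vector vanishes, division by zero makes it `iω`. -/
noncomputable def phaseRate (ω : ℝ) (a u v : ℝ → ℝ) (x : ℝ) : ℂ :=
  ω * Complex.I - (a x - ω ^ 2 : ℝ) * (u x / phase ω u v x)

theorem phase_im (ω : ℝ) (u v : ℝ → ℝ) (x : ℝ) : (phase ω u v x).im = ω * u x := by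
  simp [phase, mul_comm]

theorem norm_div_phase_le (hω : 0 < ω) (u v : ℝ → ℝ) (x : ℝ) :
    ‖(u x : ℂ) / phase ω u v x‖ ≤ ω⁻¹ := by
  rw [norm_div, Complex.norm_real]
  refine div_le_of_le_mul₀ (norm_nonneg _) (by positivity) ?_
  calc ‖u x‖ = ω⁻¹ * |(phase ω u v x).im| := by
        rw [phase_im, abs_mul, abs_of_pos hω, inv_mul_cancel_left₀ hω.ne', norm_eq_abs]
    _ ≤ ω⁻¹ * ‖phase ω u v x‖ := by gcongr; exact Complex.abs_im_le_norm _

theorem phaseRate_mul_phase (hω : ω ≠ 0) (a u v : ℝ → ℝ) (x : ℝ) :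
    phaseRate ω a u v x * phase ω u v x = (-(a x * u x) : ℝ) + v x * (ω * Complex.I) := by
  have hu : (u x : ℂ) / phase ω u v x * phase ω u v x = u x := by
    refine div_mul_cancel_of_imp fun h => ?_
    simpa [hω, h] using (phase_im ω u v x).symm
  calc phaseRate ω a u v x * phase ω u v x
      = ω * Complex.I * phase ω u v x
          - (a x - ω ^ 2 : ℝ) * ((u x : ℂ) / phase ω u v x * phase ω u v x) := by
        rw [phaseRate]; ring
    _ = _ := by
        rw [hu, phase]
        push_cast
        linear_combination (u x : ℂ) * ω ^ 2 * Complex.I_sq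

theorem phaseRate_im_of_eq_polar {r θ x : ℝ} (hr : 0 < r) (hω : 0 < ω)
    (h : phase ω u v x = r * Complex.exp (θ * Complex.I)) :
    (phaseRate ω a u v x).im = ω + (a x - ω ^ 2) * sin θ ^ 2 / ω := by
  have him : ω * u x = r * sin θ := by
    rw [← phase_im ω u v x, h, Complex.im_ofReal_mul, Complex.exp_ofReal_mul_I_im]
  have hnorm : Complex.normSq (phase ω u v x) = r ^ 2 := by
    rw [Complex.normSq_eq_norm_sq, h, norm_mul, Complex.norm_exp_ofReal_mul_I, Complex.norm_real,
      norm_of_nonneg hr.le, mul_one]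
  have hdiv : ((u x : ℂ) / phase ω u v x).im = -(sin θ ^ 2 / ω) := by
    rw [Complex.div_im, hnorm, phase_im, him, Complex.ofReal_im, Complex.ofReal_re,
      eq_div_of_mul_eq hω.ne' ((mul_comm _ _).trans him)]
    field_simp
    ring
  rw [phaseRate, Complex.sub_im, Complex.im_ofReal_mul, Complex.im_ofReal_mul, hdiv, Complex.I_im]
  ring

namespace IsSolOn

theorem hasACDeriv_phase (hcd : c ≤ d) (hω : ω ≠ 0) (ha : IntervalIntegrable a volume c d)
    (h : IsSolOn a u v c d) :
    HasACDeriv (phase ω u v) (fun x => phaseRate ω a u v x * phase ω u v x) c d := by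
  have hv := (h.hasACDeriv_snd hcd ha).clm_comp Complex.ofRealCLM
  have hu := (h.hasACDeriv_fst hcd ha).clm_comp
    (ContinuousLinearMap.toSpanSingleton ℝ (ω * Complex.I))
  refine ((hv.add hu).congr fun x _ => by simp [phase]).congr_deriv (.of_forall fun x _ => ?_)
  simp [phaseRate_mul_phase hω]

theorem intervalIntegrable_phaseRate (hcd : c ≤ d) (hω : 0 < ω)
    (ha : IntervalIntegrable a volume c d) (h : IsSolOn a u v c d) :
    IntervalIntegrable (phaseRate ω a u v) volume c d := by
  have hu : AEMeasurable (fun x => (u x : ℂ)) (volume.restrict (uIoc c d)) :=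
    Complex.measurable_ofReal.comp_aemeasurable (((h.hasACDeriv_fst hcd ha).continuousOn.mono
      uIoc_subset_uIcc).aemeasurable measurableSet_uIoc)
  have hz : AEMeasurable (phase ω u v) (volume.restrict (uIoc c d)) :=
    ((h.hasACDeriv_phase hcd hω.ne' ha).continuousOn.mono
      uIoc_subset_uIcc).aemeasurable measurableSet_uIoc
  have ha' : IntegrableOn (fun x => ((a x - ω ^ 2 : ℝ) : ℂ)) (uIoc c d) volume :=
    (intervalIntegrable_iff.1 (ha.sub intervalIntegrable_const)).ofReal
  exact intervalIntegrable_const.sub (intervalIntegrable_iff.2 <| ha'.mul_bdd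
    (hu.div hz).aestronglyMeasurable (.of_forall (norm_div_phase_le hω u v)))

theorem exists_pruferAngle (hcd : c ≤ d) (hω : 0 < ω) (ha : IntervalIntegrable a volume c d)
    (h : IsSolOn a u v c d) (hne : ∃ x ∈ Icc c d, u x ≠ 0) :
    ∃ r θ : ℝ → ℝ,
      (∀ x ∈ Icc c d, 0 < r x ∧ phase ω u v x = r x * Complex.exp (θ x * Complex.I)) ∧
      HasACDeriv θ (fun x => ω + (a x - ω ^ 2) * sin (θ x) ^ 2 / ω) c d := by
  have hw := h.intervalIntegrable_phaseRate hcd hω ha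
  have hexp : ∀ x ∈ Icc c d, phase ω u v x
      = phase ω u v c * Complex.exp (∫ t in c..x, phaseRate ω a u v t) := fun x hx =>
    (h.hasACDeriv_phase hcd hω.ne' ha).eq_mul_exp_integral hw (uIcc_of_le hcd ▸ hx)
  have hz : phase ω u v c ≠ 0 := by
    obtain ⟨x, hx, hux⟩ := hne
    intro hzc
    have := phase_im ω u v x
    simp [hexp x hx, hzc, hω.ne', hux] at this
  let W : ℝ → ℂ := fun x => ∫ t in c..x, phaseRate ω a u v t
  let r : ℝ → ℝ := fun x => ‖phase ω u v c‖ * exp (W x).re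
  let θ : ℝ → ℝ := fun x => (phase ω u v c).arg + (W x).im
  have hpolar : ∀ x ∈ Icc c d,
      0 < r x ∧ phase ω u v x = r x * Complex.exp (θ x * Complex.I) := by
    refine fun x hx => ⟨by positivity, ?_⟩
    calc phase ω u v x = ‖phase ω u v c‖ * Complex.exp ((phase ω u v c).arg * Complex.I) *
          Complex.exp ((W x).re + (W x).im * Complex.I) := by
          rw [Complex.norm_mul_exp_arg_mul_I, Complex.re_add_im, hexp x hx]
      _ = _ := by
          simp only [r, θ, Complex.exp_add, Complex.ofReal_mul, Complex.ofReal_exp,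
            Complex.ofReal_add, add_mul]
          ring
  refine ⟨r, θ, hpolar, (((HasACDeriv.integral hw).clm_comp Complex.imCLM).const_add
    _).congr_deriv (.of_forall fun x hx => ?_)⟩
  obtain ⟨hr, hx⟩ := hpolar x (uIcc_of_le hcd ▸ hx)
  exact phaseRate_im_of_eq_polar hr hω hx

end IsSolOn

end Prufer

section Angle

variable {b θ : ℝ → ℝ} {c d ω α : ℝ}

theorem ae_sin_ne_zero_of_injOn {s : Set ℝ} (hθ : InjOn θ s) :
    ∀ᵐ x, x ∈ s → sin (θ x) ≠ 0 := by
  have hzeros : {x ∈ s | sin (θ x) = 0}.Countable := by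
    refine MapsTo.countable_of_injOn (t := range fun k : ℤ => k * π) (fun x hx => ?_)
      (hθ.mono (sep_subset _ _)) (countable_range _)
    exact sin_eq_zero_iff.1 hx.2
  filter_upwards [hzeros.ae_notMem volume] with x hx hxs hsin
  exact hx ⟨hxs, hsin⟩

theorem mul_sub_lt_pruferAngle_sub (hcd : c ≤ d) (hω : 0 < ω)
    (hθ : HasACDeriv θ (fun x => ω + b x * sin (θ x) ^ 2 / ω) c d)
    (hb : ∀ᵐ x ∂volume.restrict (Icc c d), 0 ≤ b x)
    (hpos : 0 < volume {x ∈ Icc c d | 0 < b x}) : ω * (d - c) < θ d - θ c := by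
  rw [ae_restrict_iff' measurableSet_Icc] at hb
  have hle : ∀ᵐ x, x ∈ Icc c d → ω ≤ ω + b x * sin (θ x) ^ 2 / ω := by
    filter_upwards [hb] with x hx hxI
    have := hx hxI
    exact le_add_of_nonneg_right (by positivity)
  have hsin : ∀ᵐ x, x ∈ Icc c d → sin (θ x) ≠ 0 := by
    rw [← uIcc_of_le hcd] at hle ⊢
    exact ae_sin_ne_zero_of_injOn (hθ.strictMonoOn hω hle).injOn
  have hlt : ∫ _ in c..d, ω < ∫ x in c..d, (ω + b x * sin (θ x) ^ 2 / ω) := by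
    refine integral_lt_integral_of_ae_le_of_measure_setOfPred_lt_ne_zero hcd
      intervalIntegrable_const hθ.intervalIntegrable ?_ fun hzero => hpos.ne' ?_
    · rw [restrict_Ioc_eq_restrict_Icc]
      exact (ae_restrict_iff' measurableSet_Icc).2 hle
    · rw [restrict_Ioc_eq_restrict_Icc] at hzero
      refine measure_eq_zero_iff_ae_notMem.2 ?_
      filter_upwards [(ae_restrict_iff' measurableSet_Icc).1
        (measure_eq_zero_iff_ae_notMem.1 hzero), hsin] with x hx hsx hxI
      have := hxI.2
      have := hsx hxI.1
      exact hx hxI.1 (lt_add_of_pos_right ω (by positivity))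
  rwa [hθ.integral_eq_sub, intervalIntegral.integral_const, smul_eq_mul, mul_comm] at hlt

theorem exists_int_of_polar_eq {r s φ ψ : ℝ} (hr : 0 < r) (hs : 0 < s)
    (h : r * Complex.exp (φ * Complex.I) = s * Complex.exp (ψ * Complex.I)) :
    ∃ k : ℤ, φ = ψ + k * (2 * π) := by
  have hrs : r = s := by
    simpa [Complex.norm_exp_ofReal_mul_I, abs_of_pos, hr, hs] using congrArg norm h
  rw [hrs, mul_right_inj' (mod_cast hs.ne'), Complex.exp_eq_exp_iff_exists_int] at h
  obtain ⟨k, hk⟩ := h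
  refine ⟨k, ?_⟩
  simpa using congrArg Complex.im hk

/-- The function `1 / sin²` of the angle truncated at height `1 / sin² α`. -/
noncomputable def truncInvSinSq (α y : ℝ) : ℝ := 1 / max (sin y ^ 2) (sin α ^ 2)

theorem truncInvSinSq_le (hα : 0 < sin α) (y : ℝ) : truncInvSinSq α y ≤ 1 / sin α ^ 2 :=
  one_div_le_one_div_of_le (by positivity) (le_max_right _ _)

theorem truncInvSinSq_nonneg (α y : ℝ) : 0 ≤ truncInvSinSq α y := by
  unfold truncInvSinSq; positivity

theorem truncInvSinSq_mul_sin_sq_le_one (α y : ℝ) : truncInvSinSq α y * sin y ^ 2 ≤ 1 := by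
  rw [truncInvSinSq, one_div_mul_eq_div]
  exact div_le_one_of_le₀ (le_max_left _ _) (le_max_of_le_left (sq_nonneg _))

theorem continuous_truncInvSinSq (hα : 0 < sin α) : Continuous (truncInvSinSq α) := by
  refine continuous_const.div (by fun_prop) fun y => ?_
  exact (lt_max_of_lt_right (by positivity)).ne'

theorem truncInvSinSq_periodic (α : ℝ) : Function.Periodic (truncInvSinSq α) π := fun y => by
  simp only [truncInvSinSq, sin_add_pi, neg_sq]

theorem truncInvSinSq_pi_sub (α y : ℝ) : truncInvSinSq α (π - y) = truncInvSinSq α y := by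
  rw [truncInvSinSq, sin_pi_sub, truncInvSinSq]

theorem integral_truncInvSinSq_zero_left (h0 : 0 ≤ α) (h1 : α ≤ π / 2) :
    ∫ y in 0..α, truncInvSinSq α y = α / sin α ^ 2 := by
  have heq : EqOn (truncInvSinSq α) (fun _ => 1 / sin α ^ 2) (uIcc 0 α) := by
    intro y hy
    rw [uIcc_of_le h0] at hy
    have hy0 : 0 ≤ sin y := sin_nonneg_of_nonneg_of_le_pi hy.1 (by linarith [hy.2, pi_pos])
    have hle : sin y ≤ sin α :=
      sin_le_sin_of_le_of_le_pi_div_two (by linarith [hy.1, pi_pos]) h1 hy.2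
    simp only [truncInvSinSq, max_eq_right (pow_le_pow_left₀ hy0 hle 2)]
  rw [integral_congr heq, intervalIntegral.integral_const, smul_eq_mul, sub_zero, mul_one_div]

theorem integral_truncInvSinSq_pi_div_two_right (h0 : 0 < α) (h1 : α ≤ π / 2) :
    ∫ y in α..(π / 2), truncInvSinSq α y = cot α := by
  have hα : 0 < sin α := sin_pos_of_pos_of_lt_pi h0 (by linarith [pi_pos])
  have hderiv : ∀ y ∈ uIcc α (π / 2),
      HasDerivAt (fun y => -(cos y / sin y)) (truncInvSinSq α y) y := by
    intro y hy
    rw [uIcc_of_le h1] at hy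
    have hle : sin α ≤ sin y :=
      sin_le_sin_of_le_of_le_pi_div_two (by linarith [pi_pos]) hy.2 hy.1
    have hcot := ((hasDerivAt_cos y).div (hasDerivAt_sin y) (hα.trans_le hle).ne').neg
    refine hcot.congr_deriv ?_
    rw [truncInvSinSq, max_eq_left (pow_le_pow_left₀ hα.le hle 2), ← neg_div]
    congr 1
    linear_combination sin_sq_add_cos_sq y
  rw [integral_eq_sub_of_hasDerivAt hderiv ((continuous_truncInvSinSq hα).intervalIntegrable _ _),
    cos_pi_div_two, cot_eq_cos_div_sin]
  ring

theorem integral_truncInvSinSq (h0 : 0 < α) (h1 : α < π / 2) :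
    ∫ y in 0..π, truncInvSinSq α y = 2 * cot α + 2 * α / sin α ^ 2 := by
  have hα : 0 < sin α := sin_pos_of_pos_of_lt_pi h0 (by linarith [pi_pos])
  have hint : ∀ x y, IntervalIntegrable (truncInvSinSq α) volume x y :=
    (continuous_truncInvSinSq hα).intervalIntegrable
  have hhalf : ∫ y in 0..(π / 2), truncInvSinSq α y = α / sin α ^ 2 + cot α := by
    rw [← integral_add_adjacent_intervals (hint 0 α) (hint α _),
      integral_truncInvSinSq_zero_left h0.le h1.le,
      integral_truncInvSinSq_pi_div_two_right h0 h1.le]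
  have hsymm : ∫ y in (π / 2)..π, truncInvSinSq α y = ∫ y in 0..(π / 2), truncInvSinSq α y := by
    have := integral_comp_sub_left (a := π / 2) (b := π) (truncInvSinSq α) π
    simpa only [truncInvSinSq_pi_sub, sub_self, sub_half] using this
  rw [← integral_add_adjacent_intervals (hint 0 (π / 2)) (hint _ π), hsymm, hhalf]
  ring

theorem integral_truncInvSinSq_le_of_hasACDeriv (hcd : c ≤ d) (hω : 0 < ω) (hα : 0 < sin α)
    (hθ : HasACDeriv θ (fun x => ω + b x * sin (θ x) ^ 2 / ω) c d)
    (hbi : IntervalIntegrable b volume c d)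
    (hb : ∀ᵐ x ∂volume.restrict (Icc c d), 0 ≤ b x) :
    ∫ y in θ c..θ d, truncInvSinSq α y
      ≤ (∫ x in c..d, b x) / ω + (d - c) * (ω / sin α ^ 2) := by
  have hg := continuous_truncInvSinSq hα
  let G : ℝ → ℝ := fun y => ∫ t in 0..y, truncInvSinSq α t
  have hG : ∀ y, HasDerivAt G (truncInvSinSq α y) y :=
    fun y => (hg.integral_hasStrictDerivAt 0 y).hasDerivAt
  have hderiv : deriv G = truncInvSinSq α := funext fun y => (hG y).deriv
  have hlip : LocallyLipschitz G :=
    (contDiff_one_iff_deriv.2 ⟨fun y => (hG y).differentiableAt, hderiv ▸ hg⟩).locallyLipschitz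
  have hGθ := hθ.comp hlip fun y => (hG y).hasFDerivAt
  have hle : ∀ᵐ x ∂volume.restrict (Icc c d),
      (ω + b x * sin (θ x) ^ 2 / ω) * truncInvSinSq α (θ x) ≤ b x / ω + ω / sin α ^ 2 := by
    filter_upwards [hb] with x hx
    calc (ω + b x * sin (θ x) ^ 2 / ω) * truncInvSinSq α (θ x)
        = b x / ω * (truncInvSinSq α (θ x) * sin (θ x) ^ 2) + ω * truncInvSinSq α (θ x) := by ring
      _ ≤ b x / ω * 1 + ω * (1 / sin α ^ 2) := by
        gcongr
        · exact truncInvSinSq_mul_sin_sq_le_one α _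
        · exact truncInvSinSq_le hα _
      _ = b x / ω + ω / sin α ^ 2 := by ring
  have hbi' := hbi.div_const ω
  have hmono := integral_mono_ae_restrict hcd hGθ.intervalIntegrable
    (hbi'.add intervalIntegrable_const) hle
  rwa [hGθ.integral_eq_sub, integral_interval_sub_left (hg.intervalIntegrable _ _)
    (hg.intervalIntegrable _ _), integral_add hbi' intervalIntegrable_const,
    intervalIntegral.integral_div, intervalIntegral.integral_const, smul_eq_mul] at hmono

theorem mul_cot_le_integral_of_hasACDeriv {m : ℕ} (hcd : c < d) (hω : 0 < ω)
    (hm : ω * (d - c) < m * π) (hθ : HasACDeriv θ (fun x => ω + b x * sin (θ x) ^ 2 / ω) c d)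
    (hbi : IntervalIntegrable b volume c d)
    (hb : ∀ᵐ x ∂volume.restrict (Icc c d), 0 ≤ b x) (hrot : θ c + m * π ≤ θ d) :
    2 * m * ω * cot (ω * (d - c) / (2 * m)) ≤ ∫ x in c..d, b x := by
  have hdc := sub_pos.2 hcd
  have hm0 : (0 : ℝ) < m := pos_of_mul_pos_left ((mul_pos hω hdc).trans hm) pi_pos.le
  -- For this `α` the terms with `sin² α` on the two sides of the comparison cancel.
  set α := ω * (d - c) / (2 * m) with hα
  have h0 : 0 < α := by positivity
  have h1 : α < π / 2 := by rw [hα, div_lt_iff₀ (by positivity)]; linarith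
  have hsin : 0 < sin α := sin_pos_of_pos_of_lt_pi h0 (by linarith [pi_pos])
  have hint := (continuous_truncInvSinSq hsin).intervalIntegrable (μ := volume)
  have hperiods : ∫ y in θ c..(θ c + m * π), truncInvSinSq α y
      = m * (2 * cot α + 2 * α / sin α ^ 2) := by
    have := (truncInvSinSq_periodic α).intervalIntegral_add_zsmul_eq m (θ c) hint
    rwa [(truncInvSinSq_periodic α).intervalIntegral_add_eq (θ c) 0, zero_add,
      integral_truncInvSinSq h0 h1, zsmul_eq_mul, zsmul_eq_mul, Int.cast_natCast] at this
  have hmore : ∫ y in θ c..(θ c + m * π), truncInvSinSq α y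
      ≤ ∫ y in θ c..θ d, truncInvSinSq α y := by
    refine integral_mono_interval le_rfl (le_add_of_nonneg_right (by positivity)) hrot
      (.of_forall (truncInvSinSq_nonneg α)) (hint _ _)
  have hcancel : (d - c) * (ω / sin α ^ 2) = m * (2 * α / sin α ^ 2) := by
    rw [hα]; field_simp
  have hmain : m * (2 * cot α) ≤ (∫ x in c..d, b x) / ω := by
    linarith [integral_truncInvSinSq_le_of_hasACDeriv hcd.le hω hsin hθ hbi hb]
  rw [le_div_iff₀ hω] at hmain
  linarith

end Angle

/-- The potentials `a ∈ L_T` above the constant `l` for which `u'' + au = 0` has a nontrivial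
solution with Floquet multiplier `(-1)^m` on `[0, T]`: a periodic solution for even `m` and an
antiperiodic one for odd `m`. -/
def resonantPotentials (T l : ℝ) (m : ℕ) : Set (ℝ → ℝ) :=
  {a | MemLT T a ∧ Prec T (fun _ => l) a ∧ ∃ u v : ℝ → ℝ,
    IsSolOn a u v 0 T ∧ u T = (-1) ^ m * u 0 ∧ v T = (-1) ^ m * v 0 ∧ ∃ x ∈ Icc 0 T, u x ≠ 0}

theorem MemLT.intervalIntegrable {T : ℝ} {a : ℝ → ℝ} (hT : 0 ≤ T) (ha : MemLT T a) :
    IntervalIntegrable a volume 0 T :=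
  (intervalIntegrable_iff_integrableOn_Icc_of_le hT).2 ha.2.2

section LowerBound

variable {a : ℝ → ℝ} {T ω : ℝ} {m : ℕ}

theorem exists_int_of_polar_eq_neg_one_pow_mul {r s φ ψ : ℝ} (hr : 0 < r) (hs : 0 < s)
    (h : r * Complex.exp (φ * Complex.I) = (-1) ^ m * (s * Complex.exp (ψ * Complex.I))) :
    ∃ k : ℤ, φ = ψ + m * π + k * (2 * π) := by
  refine exists_int_of_polar_eq hr hs (h.trans ?_)
  rw [Complex.ofReal_add, add_mul, Complex.exp_add, Complex.ofReal_mul, Complex.ofReal_natCast,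
    mul_assoc (m : ℂ), Complex.exp_nat_mul, Complex.exp_pi_mul_I]
  ring

theorem exists_pruferAngle_of_mem_resonantPotentials (hT : 0 ≤ T) (hω : 0 < ω)
    (hlo : (m - 2) * π ≤ ω * T) (ha : a ∈ resonantPotentials T (ω ^ 2) m) :
    ∃ θ : ℝ → ℝ, HasACDeriv θ (fun x => ω + (a x - ω ^ 2) * sin (θ x) ^ 2 / ω) 0 T ∧
      θ 0 + m * π ≤ θ T := by
  obtain ⟨haT, ⟨hle, hlt⟩, u, v, hsol, hu, hv, hne⟩ := ha
  obtain ⟨r, θ, hpolar, hθ⟩ := hsol.exists_pruferAngle hT hω (haT.intervalIntegrable hT) hne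
  refine ⟨θ, hθ, ?_⟩
  obtain ⟨hr0, hz0⟩ := hpolar 0 (left_mem_Icc.2 hT)
  obtain ⟨hrT, hzT⟩ := hpolar T (right_mem_Icc.2 hT)
  have hmult : phase ω u v T = (-1) ^ m * phase ω u v 0 := by
    rw [phase, phase, hu, hv]
    push_cast
    ring
  obtain ⟨k, hk⟩ := exists_int_of_polar_eq_neg_one_pow_mul hrT hr0 (hzT ▸ hz0 ▸ hmult)
  have hrot : ω * (T - 0) < θ T - θ 0 :=
    mul_sub_lt_pruferAngle_sub hT hω hθ (hle.mono fun x => sub_nonneg.2) (by simpa using hlt)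
  have hk0 : (0 : ℤ) ≤ k := by
    have : (-1 : ℝ) < k := by
      refine lt_of_mul_lt_mul_right ?_ pi_pos.le
      linarith
    exact_mod_cast this
  rw [hk]
  have : (0 : ℝ) ≤ k := mod_cast hk0
  exact le_add_of_nonneg_right (by positivity)

theorem mul_cot_le_integral_of_mem_resonantPotentials (hT : 0 < T) (hω : 0 < ω)
    (hlo : (m - 2) * π ≤ ω * T) (hhi : ω * T < m * π) (ha : a ∈ resonantPotentials T (ω ^ 2) m) :
    2 * m * ω * cot (ω * T / (2 * m)) ≤ ∫ x in 0..T, |a x - ω ^ 2| := by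
  obtain ⟨θ, hθ, hrot⟩ := exists_pruferAngle_of_mem_resonantPotentials hT.le hω hlo ha
  obtain ⟨haT, ⟨hle, -⟩, -⟩ := ha
  have hle' : ∀ᵐ x ∂volume.restrict (Icc 0 T), 0 ≤ a x - ω ^ 2 := hle.mono fun x => sub_nonneg.2
  have hbi : IntervalIntegrable (fun x => a x - ω ^ 2) volume 0 T :=
    (haT.intervalIntegrable hT.le).sub intervalIntegrable_const
  calc 2 * m * ω * cot (ω * T / (2 * m))
      ≤ ∫ x in 0..T, a x - ω ^ 2 := by
        simpa using mul_cot_le_integral_of_hasACDeriv hT hω (by simpa using hhi) hθ hbi hle' hrot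
    _ ≤ ∫ x in 0..T, |a x - ω ^ 2| :=
        integral_mono_on hT.le hbi hbi.abs fun x _ => le_abs_self _

end LowerBound

section Propagation

variable {a u v : ℝ → ℝ} {c d e : ℝ}

namespace IsSolOn

theorem hasDerivWithinAt (h : IsSolOn a u v c d) (x : ℝ) :
    HasDerivWithinAt u (v x) (Icc c d) x := by
  by_cases hx : x ∈ Icc c d
  · exact h.1 x hx
  · exact HasFDerivWithinAt.of_notMem_closure (by rwa [isClosed_Icc.closure_eq])

theorem congr {u' v' : ℝ → ℝ} (h : IsSolOn a u v c d) (hu : EqOn u' u (Icc c d))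
    (hv : EqOn v' v (Icc c d)) : IsSolOn a u' v' c d := by
  refine ⟨fun x hx => hv hx ▸ (h.1 x hx).congr_of_mem hu hx, fun x hx => ?_⟩
  have hint : ∫ t in c..x, a t * u' t = ∫ t in c..x, a t * u t :=
    integral_congr fun t ht => by
      rw [uIcc_of_le hx.1] at ht
      simp only [hu ⟨ht.1, ht.2.trans hx.2⟩]
  rw [hv hx, hv ⟨le_rfl, hx.1.trans hx.2⟩, hint, h.2 x hx]

theorem trans (hcd : c ≤ d) (hde : d ≤ e) (ha : IntervalIntegrable a volume c e)
    (h : IsSolOn a u v c d) (h' : IsSolOn a u v d e) : IsSolOn a u v c e := by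
  have hderiv : ∀ x, HasDerivWithinAt u (v x) (Icc c e) x := fun x =>
    Icc_union_Icc_eq_Icc hcd hde ▸ (h.hasDerivWithinAt x).union (h'.hasDerivWithinAt x)
  refine ⟨fun x _ => hderiv x, fun x hx => ?_⟩
  rcases le_total x d with hxd | hdx
  · exact h.2 x ⟨hx.1, hxd⟩
  have hau : IntervalIntegrable (fun x => a x * u x) volume c e :=
    ha.mul_continuousOn fun x _ =>
      uIcc_of_le (hcd.trans hde) ▸ (hderiv x).continuousWithinAt
  have hd : d ∈ uIcc c e := uIcc_of_le (hcd.trans hde) ▸ ⟨hcd, hde⟩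
  have hx' : x ∈ uIcc c e := uIcc_of_le (hcd.trans hde) ▸ hx
  rw [← integral_add_adjacent_intervals (hau.mono_set (uIcc_subset_uIcc_left hd))
    (hau.mono_set (uIcc_subset_uIcc hd hx')), h'.2 x ⟨hdx, hx.2⟩, h.2 d ⟨hcd, le_rfl⟩, sub_sub]

theorem const_mul (κ : ℝ) (h : IsSolOn a u v c d) :
    IsSolOn a (fun x => κ * u x) (fun x => κ * v x) c d := by
  refine ⟨fun x hx => (h.1 x hx).const_mul κ, fun x hx => ?_⟩
  simp only [mul_left_comm _ κ, intervalIntegral.integral_const_mul, h.2 x hx, mul_sub]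

theorem comp_sub_const {s : ℝ} (ha : Function.Periodic a s) (h : IsSolOn a u v c d) :
    IsSolOn a (fun x => u (x - s)) (fun x => v (x - s)) (c + s) (d + s) := by
  have hmaps : MapsTo (fun x => x - s) (Icc (c + s) (d + s)) (Icc c d) :=
    fun x hx => ⟨le_sub_iff_add_le.2 hx.1, sub_le_iff_le_add.2 hx.2⟩
  refine ⟨fun x hx => ?_, fun x hx => ?_⟩
  · exact ((h.1 _ (hmaps hx)).comp x ((hasDerivWithinAt_id x _).sub_const s) hmaps).congr_deriv
      (mul_one _)
  · have hint : ∫ t in (c + s)..x, a t * u (t - s) = ∫ t in c..(x - s), a t * u t := by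
      simpa only [ha.sub_eq, add_sub_cancel_right] using
        integral_comp_sub_right (a := c + s) (b := x) (fun t => a t * u t) s
    simp only [hint, add_sub_cancel_right, h.2 _ (hmaps hx)]

end IsSolOn

/-- Some solution of `u'' + au = 0` on `[c, d]` has `(u, u') = p` at `c` and `(u, u') = q` at
`d`. -/
def Propagates (a : ℝ → ℝ) (c d : ℝ) (p q : ℝ × ℝ) : Prop :=
  ∃ u v : ℝ → ℝ, IsSolOn a u v c d ∧ (u c, v c) = p ∧ (u d, v d) = q

namespace Propagates

variable {p q r : ℝ × ℝ}

theorem refl (a : ℝ → ℝ) (c : ℝ) (p : ℝ × ℝ) : Propagates a c c p p := by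
  refine ⟨fun x => p.1 + p.2 * (x - c), fun _ => p.2, ⟨fun x _ => ?_, fun x hx => ?_⟩,
    by simp, by simp⟩
  · exact ((((hasDerivAt_id x).sub_const c).const_mul p.2).const_add p.1).hasDerivWithinAt
      |>.congr_deriv (mul_one _)
  · obtain rfl : x = c := by simpa using hx
    simp

theorem trans (hcd : c ≤ d) (hde : d ≤ e) (ha : IntervalIntegrable a volume c e)
    (hpq : Propagates a c d p q) (hqr : Propagates a d e q r) : Propagates a c e p r := by
  obtain ⟨u₁, v₁, h₁, rfl, rfl⟩ := hpq
  obtain ⟨u₂, v₂, h₂, heq, rfl⟩ := hqr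
  obtain ⟨hu, hv⟩ := Prod.mk.inj heq
  let glue (f g : ℝ → ℝ) (x : ℝ) : ℝ := if x ≤ d then f x else g x
  have hleft : ∀ f g, EqOn (glue f g) f (Icc c d) := fun f g x hx => if_pos hx.2
  have hright : ∀ f g, g d = f d → EqOn (glue f g) g (Icc d e) := by
    intro f g hfg x hx
    rcases hx.1.eq_or_lt with rfl | hdx
    · exact (if_pos le_rfl).trans hfg.symm
    · exact if_neg hdx.not_ge
  refine ⟨glue u₁ u₂, glue v₁ v₂, IsSolOn.trans hcd hde ha (h₁.congr (hleft _ _) (hleft _ _))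
    (h₂.congr (hright _ _ hu) (hright _ _ hv)), ?_, ?_⟩
  · rw [hleft u₁ u₂ ⟨le_rfl, hcd⟩, hleft v₁ v₂ ⟨le_rfl, hcd⟩]
  · rw [hright _ _ hu ⟨hde, le_rfl⟩, hright _ _ hv ⟨hde, le_rfl⟩]

theorem smul (κ : ℝ) (h : Propagates a c d p q) : Propagates a c d (κ • p) (κ • q) := by
  obtain ⟨u, v, h, rfl, rfl⟩ := h
  exact ⟨_, _, h.const_mul κ, rfl, rfl⟩

theorem add_right {s : ℝ} (ha : Function.Periodic a s) (h : Propagates a c d p q) :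
    Propagates a (c + s) (d + s) p q := by
  obtain ⟨u, v, h, rfl, rfl⟩ := h
  exact ⟨_, _, h.comp_sub_const ha, by simp only [add_sub_cancel_right],
    by simp only [add_sub_cancel_right]⟩

theorem nat_mul_of_periodic {h κ : ℝ} (hh : 0 ≤ h) (hper : Function.Periodic a h)
    (ha : ∀ x y, IntervalIntegrable a volume x y) (hp : Propagates a 0 h p (κ • p)) (m : ℕ) :
    Propagates a 0 (m * h) p (κ ^ m • p) := by
  induction m with
  | zero => simpa using refl a 0 p
  | succ m ih =>
    have hstep := (hp.smul (κ ^ m)).add_right (hper.nat_mul m)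
    rw [zero_add, smul_smul, ← pow_succ] at hstep
    have hlast : h + m * h = (m + 1 : ℕ) * h := by push_cast; ring
    exact hlast ▸ ih.trans (by positivity) (le_add_of_nonneg_left hh) (ha _ _) hstep

theorem of_eqOn_sq {κ φ ψ : ℝ} (A : ℝ) (ha : EqOn a (fun _ => κ ^ 2) (Ioo c d))
    (hψ : ψ = φ + κ * (d - c)) :
    Propagates a c d (A * cos φ, -(A * κ * sin φ)) (A * cos ψ, -(A * κ * sin ψ)) := by
  let τ : ℝ → ℝ := fun x => φ + κ * (x - c)
  have hτ : ∀ x, HasDerivAt τ κ x := fun x =>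
    ((((hasDerivAt_id x).sub_const c).const_mul κ).const_add φ).congr_deriv (mul_one κ)
  have hu : ∀ x, HasDerivAt (fun x => A * cos (τ x)) (-(A * κ * sin (τ x))) x := fun x =>
    ((hτ x).cos.const_mul A).congr_deriv (by ring)
  have hv : ∀ x, HasDerivAt (fun x => -(A * κ * sin (τ x)))
      (-(κ ^ 2 * (A * cos (τ x)))) x := fun x =>
    ((hτ x).sin.const_mul (A * κ)).neg.congr_deriv (by ring)
  refine ⟨_, _, ⟨fun x _ => (hu x).hasDerivWithinAt, fun x hx => ?_⟩, ?_, ?_⟩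
  · have hint : ∫ t in c..x, a t * (A * cos (τ t))
        = ∫ t in c..x, κ ^ 2 * (A * cos (τ t)) :=
      integral_congr_Ioo_of_le hx.1 fun t ht => by
        simp only [ha ⟨ht.1, ht.2.trans_le hx.2⟩]
    have hftc := integral_eq_sub_of_hasDerivAt (fun t _ => hv t)
      ((by fun_prop : Continuous fun t => -(κ ^ 2 * (A * cos (τ t)))).intervalIntegrable c x)
    rw [intervalIntegral.integral_neg] at hftc
    rw [hint]
    linarith
  · simp [τ]
  · simp [τ, hψ]

theorem mem_resonantPotentials {T l : ℝ} {m : ℕ} (hT : 0 ≤ T) (haT : MemLT T a)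
    (hal : Prec T (fun _ => l) a) (hp : p.1 ≠ 0) (h : Propagates a 0 T p ((-1 : ℝ) ^ m • p)) :
    a ∈ resonantPotentials T l m := by
  obtain ⟨u, v, hsol, rfl, hT'⟩ := h
  obtain ⟨hu, hv⟩ := Prod.mk.inj hT'
  exact ⟨haT, hal, u, v, hsol, hu, hv, 0, ⟨le_rfl, hT⟩, hp⟩

end Propagates

end Propagation

section TangentEquation

variable {ω δ K μ : ℝ}

theorem exists_mul_sin_eq_mul_cos (hω : 0 < ω) (hδ : 0 < δ) (hωδ : ω * δ < π / 2)
    (hK : ω * tan (ω * δ) < K) :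
    ∃ μ, ω < μ ∧ μ * δ < π / 2 ∧ μ * sin (μ * δ) = K * cos (μ * δ) := by
  have hcos : 0 < cos (ω * δ) :=
    cos_pos_of_mem_Ioo ⟨by linarith [mul_pos hω hδ, pi_pos], hωδ⟩
  have hend : π / 2 / δ * δ = π / 2 := div_mul_cancel₀ _ hδ.ne'
  have hlo : ω * sin (ω * δ) - K * cos (ω * δ) < 0 := by
    rw [tan_eq_sin_div_cos, ← mul_div_assoc, div_lt_iff₀ hcos] at hK
    exact sub_neg.2 hK
  have hhi : 0 < π / 2 / δ * sin (π / 2 / δ * δ) - K * cos (π / 2 / δ * δ) := by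
    rw [hend, sin_pi_div_two, cos_pi_div_two]
    simp only [mul_one, mul_zero, sub_zero]
    positivity
  obtain ⟨μ, ⟨hωμ, hμ⟩, heq⟩ := intermediate_value_Ioo
    (f := fun μ => μ * sin (μ * δ) - K * cos (μ * δ)) ((le_div_iff₀ hδ).2 hωδ.le)
    (by fun_prop) ⟨hlo, hhi⟩
  exact ⟨μ, hωμ, (lt_div_iff₀ hδ).1 hμ, sub_eq_zero.1 heq⟩

theorem sq_mul_le_of_mul_sin_eq_mul_cos (hμ : 0 < μ) (hδ : 0 < δ) (hμδ : μ * δ < π / 2)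
    (h : μ * sin (μ * δ) = K * cos (μ * δ)) : μ ^ 2 * δ ≤ K := by
  have h0 : 0 < μ * δ := mul_pos hμ hδ
  have hcos : 0 < cos (μ * δ) := cos_pos_of_mem_Ioo ⟨by linarith [pi_pos], hμδ⟩
  calc μ ^ 2 * δ = μ * (μ * δ) := by ring
    _ ≤ μ * tan (μ * δ) := by gcongr; exact le_tan h0.le hμδ
    _ = K := by rw [tan_eq_sin_div_cos, ← mul_div_assoc, h, mul_div_cancel_right₀ _ hcos.ne']

theorem tan_lt_cot {x y : ℝ} (hx : 0 < x) (hy : 0 < y) (hxy : x + y < π / 2) : tan y < cot x := by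
  rw [← tan_inv_eq_cot, ← tan_pi_div_two_sub]
  exact tan_lt_tan_of_lt_of_lt_pi_div_two (by linarith) (by linarith) (by linarith)

end TangentEquation

section PulseTrain

variable {h l κ μ ω x : ℝ} {m : ℕ}

/-- The `h`-periodic step function with value `κ` on `[0, l)` and `μ` on `[l, h)`. -/
noncomputable def pulseTrain (h l κ μ x : ℝ) : ℝ := if Int.fract (x / h) * h < l then κ else μ

theorem pulseTrain_periodic (hh : h ≠ 0) (l κ μ : ℝ) : Function.Periodic (pulseTrain h l κ μ) h :=
  fun x => by simp only [pulseTrain, add_div, div_self hh, Int.fract_add_one]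

theorem measurable_pulseTrain (h l κ μ : ℝ) : Measurable (pulseTrain h l κ μ) :=
  .ite (measurableSet_lt (by fun_prop) measurable_const) measurable_const measurable_const

theorem intervalIntegrable_pulseTrain (h l κ μ x y : ℝ) :
    IntervalIntegrable (pulseTrain h l κ μ) volume x y := by
  refine (intervalIntegrable_const (c := max ‖κ‖ ‖μ‖)).mono_fun
    (measurable_pulseTrain h l κ μ).aestronglyMeasurable (.of_forall fun t => ?_)
  rw [norm_of_nonneg (le_max_of_le_left (norm_nonneg κ))]
  dsimp only [pulseTrain]
  split_ifs
  · exact le_max_left _ _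
  · exact le_max_right _ _

theorem pulseTrain_of_mem_Ico (l κ μ : ℝ) (hx : x ∈ Ico 0 h) :
    pulseTrain h l κ μ x = if x < l then κ else μ := by
  have hh : 0 < h := hx.1.trans_lt hx.2
  rw [pulseTrain, Int.fract_eq_self.2 ⟨div_nonneg hx.1 hh.le, (div_lt_one hh).2 hx.2⟩,
    div_mul_cancel₀ x hh.ne']

theorem eqOn_pulseTrain_Ioo_left (hlh : l ≤ h) (κ μ : ℝ) :
    EqOn (pulseTrain h l κ μ) (fun _ => κ) (Ioo 0 l) := fun x hx => by
  rw [pulseTrain_of_mem_Ico l κ μ ⟨hx.1.le, hx.2.trans_le hlh⟩, if_pos hx.2]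

theorem eqOn_pulseTrain_Ioo_right (hl : 0 ≤ l) (κ μ : ℝ) :
    EqOn (pulseTrain h l κ μ) (fun _ => μ) (Ioo l h) := fun x hx => by
  rw [pulseTrain_of_mem_Ico l κ μ ⟨hl.trans hx.1.le, hx.2⟩, if_neg hx.1.not_gt]

theorem integral_pulseTrain (hl : 0 ≤ l) (hlh : l ≤ h) (κ μ : ℝ) :
    ∫ x in 0..h, pulseTrain h l κ μ x = l * κ + (h - l) * μ := by
  have hint := intervalIntegrable_pulseTrain h l κ μ
  rw [← integral_add_adjacent_intervals (hint 0 l) (hint l h),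
    integral_congr_Ioo_of_le hl (eqOn_pulseTrain_Ioo_left hlh κ μ),
    integral_congr_Ioo_of_le hlh (eqOn_pulseTrain_Ioo_right hl κ μ)]
  simp

theorem integral_pulseTrain_nat_mul (hl : 0 ≤ l) (hlh : l ≤ h) (hh : h ≠ 0) (κ μ : ℝ) (m : ℕ) :
    ∫ x in 0..(m * h), pulseTrain h l κ μ x = m * (l * κ + (h - l) * μ) := by
  have := (pulseTrain_periodic hh l κ μ).intervalIntegral_add_zsmul_eq m 0
    (intervalIntegrable_pulseTrain h l κ μ)
  rwa [zero_add, zero_add, integral_pulseTrain hl hlh, zsmul_eq_mul, zsmul_eq_mul,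
    Int.cast_natCast] at this

theorem abs_pulseTrain_sub (h l κ μ x : ℝ) :
    |pulseTrain h l κ μ x - κ| = pulseTrain h l 0 |μ - κ| x := by
  unfold pulseTrain
  split_ifs <;> simp

theorem memLT_pulseTrain (hh : 0 < h) (l κ μ : ℝ) (m : ℕ) :
    MemLT (m * h) (pulseTrain h l κ μ) :=
  ⟨measurable_pulseTrain h l κ μ, (pulseTrain_periodic hh.ne' l κ μ).nat_mul m,
    (intervalIntegrable_iff_integrableOn_Icc_of_le (by positivity)).1
      (intervalIntegrable_pulseTrain h l κ μ _ _)⟩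

theorem prec_pulseTrain (hl : 0 ≤ l) (hlh : l < h) (hκμ : κ < μ) (hm : m ≠ 0) :
    Prec (m * h) (fun _ => κ) (pulseTrain h l κ μ) := by
  refine ⟨.of_forall fun x => ?_, ?_⟩
  · dsimp only [pulseTrain]
    split_ifs
    exacts [le_rfl, hκμ.le]
  · have hsub : Ioo l h ⊆ {x ∈ Icc 0 (m * h) | κ < pulseTrain h l κ μ x} := by
      intro x hx
      have hm1 : (1 : ℝ) ≤ m := mod_cast Nat.one_le_iff_ne_zero.2 hm
      refine ⟨⟨hl.trans hx.1.le, hx.2.le.trans ?_⟩, ?_⟩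
      · exact le_mul_of_one_le_left (hl.trans hlh.le) hm1
      · rwa [eqOn_pulseTrain_Ioo_right hl κ μ hx]
    refine lt_of_lt_of_le ?_ (measure_mono hsub)
    simpa using hlh

theorem propagates_pulseTrain (hl : 0 ≤ l) (hlh : l ≤ h) (hsin : sin (ω * l / 2) ≠ 0)
    (hcos : cos (μ * ((h - l) / 2)) ≠ 0)
    (hμ : μ * sin (μ * ((h - l) / 2)) = ω * cot (ω * l / 2) * cos (μ * ((h - l) / 2))) :
    Propagates (pulseTrain h l (ω ^ 2) (μ ^ 2)) 0 h (-sin (ω * l / 2), ω * cos (ω * l / 2))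
      ((-1 : ℝ) • (-sin (ω * l / 2), ω * cos (ω * l / 2))) := by
  -- A sine centred in `[0, l]` is joined to a cosine centred in `[l, h]`; `hμ` matches the slopes
  -- at `l`, and by symmetry the solution and its slope have changed sign after one period.
  set y := ω * l / 2 with hy
  set z := μ * ((h - l) / 2) with hz
  have hleft := Propagates.of_eqOn_sq (φ := -(y + π / 2)) (ψ := y - π / 2) 1
    (eqOn_pulseTrain_Ioo_left hlh (ω ^ 2) (μ ^ 2)) (by rw [hy]; ring)
  have hright := Propagates.of_eqOn_sq (φ := -z) (ψ := z) (sin y / cos z)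
    (eqOn_pulseTrain_Ioo_right (h := h) hl (ω ^ 2) (μ ^ 2)) (by rw [hz]; ring)
  have hslope : sin y / cos z * μ * sin z = ω * cos y := by
    rw [cot_eq_cos_div_sin] at hμ
    calc sin y / cos z * μ * sin z = sin y / cos z * (μ * sin z) := by ring
      _ = ω * cos y := by rw [hμ]; field_simp
  have hamp : sin y / cos z * cos z = sin y := div_mul_cancel₀ _ hcos
  simp only [cos_neg, sin_neg, cos_add_pi_div_two, sin_add_pi_div_two, cos_sub_pi_div_two,
    sin_sub_pi_div_two, one_mul, mul_neg, neg_neg] at hleft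
  simp only [cos_neg, sin_neg, mul_neg, neg_neg, hslope, hamp] at hright
  simpa using hleft.trans hl hlh (intervalIntegrable_pulseTrain _ _ _ _ _ _) hright

theorem exists_mem_resonantPotentials_integral_le (hω : 0 < ω) (hl : 0 < l) (hlh : l < h)
    (hωh : ω * h < π) (hm : m ≠ 0) :
    ∃ a ∈ resonantPotentials (m * h) (ω ^ 2) m,
      (∫ x in 0..(m * h), |a x - ω ^ 2|) ≤ 2 * m * ω * cot (ω * l / 2) := by
  have hh : 0 < h := hl.trans hlh
  have hωl : 0 < ω * l := mul_pos hω hl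
  set δ := (h - l) / 2 with hδ
  have hδ0 : 0 < δ := half_pos (sub_pos.2 hlh)
  have hsum : ω * l / 2 + ω * δ < π / 2 := by rw [hδ]; linarith
  have htan := mul_lt_mul_of_pos_left (tan_lt_cot (by positivity) (by positivity) hsum) hω
  obtain ⟨μ, hωμ, hμδ, hμ⟩ := exists_mul_sin_eq_mul_cos hω hδ0 (by linarith) htan
  have hμ0 : 0 < μ := hω.trans hωμ
  have hcos : 0 < cos (μ * δ) :=
    cos_pos_of_mem_Ioo ⟨by linarith [mul_pos hμ0 hδ0, pi_pos], hμδ⟩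
  have hsin : 0 < sin (ω * l / 2) :=
    sin_pos_of_pos_of_lt_pi (by positivity) (by linarith [mul_pos hω hδ0, pi_pos])
  have hprop := (propagates_pulseTrain hl.le hlh.le hsin.ne' hcos.ne' hμ).nat_mul_of_periodic hh.le
    (pulseTrain_periodic hh.ne' _ _ _) (intervalIntegrable_pulseTrain _ _ _ _) m
  refine ⟨pulseTrain h l (ω ^ 2) (μ ^ 2), hprop.mem_resonantPotentials (by positivity)
    (memLT_pulseTrain hh _ _ _ m)
    (prec_pulseTrain hl.le hlh (pow_lt_pow_left₀ hωμ hω.le two_ne_zero) hm)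
    (neg_ne_zero.2 hsin.ne'), ?_⟩
  have hle : μ ^ 2 * δ ≤ ω * cot (ω * l / 2) := sq_mul_le_of_mul_sin_eq_mul_cos hμ0 hδ0 hμδ hμ
  calc ∫ x in 0..(m * h), |pulseTrain h l (ω ^ 2) (μ ^ 2) x - ω ^ 2|
      = m * ((h - l) * (μ ^ 2 - ω ^ 2)) := by
        simp only [abs_pulseTrain_sub, integral_pulseTrain_nat_mul hl.le hlh.le hh.ne', mul_zero,
          zero_add, abs_of_nonneg (sub_nonneg.2 (pow_le_pow_left₀ hω.le hωμ.le 2))]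
    _ ≤ m * ((h - l) * μ ^ 2) := by
        have := sub_pos.2 hlh
        gcongr
        exact sub_le_self _ (sq_nonneg ω)
    _ = 2 * m * (μ ^ 2 * δ) := by rw [hδ]; ring
    _ ≤ 2 * m * (ω * cot (ω * l / 2)) := by gcongr
    _ = 2 * m * ω * cot (ω * l / 2) := by ring

theorem exists_mem_resonantPotentials_integral_lt {T ε : ℝ} (hT : 0 < T) (hω : 0 < ω)
    (hhi : ω * T < m * π) (hε : 0 < ε) :
    ∃ a ∈ resonantPotentials T (ω ^ 2) m,
      (∫ x in 0..T, |a x - ω ^ 2|) < 2 * m * ω * cot (ω * T / (2 * m)) + ε := by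
  have hm0 : (0 : ℝ) < m := pos_of_mul_pos_left ((mul_pos hω hT).trans hhi) pi_pos.le
  set h := T / m with hh
  have hh0 : 0 < h := by positivity
  have hTh : m * h = T := mul_div_cancel₀ T hm0.ne'
  have hωh : ω * h < π := by
    rw [hh, ← mul_div_assoc, div_lt_iff₀ hm0]
    linarith
  have hsin : sin (ω * h / 2) ≠ 0 :=
    (sin_pos_of_pos_of_lt_pi (by positivity) (by linarith [pi_pos])).ne'
  have hcont : ContinuousAt (fun l => 2 * m * ω * cot (ω * l / 2)) h := by
    simp only [cot_eq_cos_div_sin]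
    fun_prop (disch := exact hsin)
  have hlt : 2 * m * ω * cot (ω * h / 2) < 2 * m * ω * cot (ω * T / (2 * m)) + ε := by
    rw [show ω * T / (2 * m) = ω * h / 2 by rw [hh]; field_simp]
    exact lt_add_of_pos_right _ hε
  obtain ⟨l, hl, hl0, hlh⟩ :=
    ((hcont.eventually_lt_const hlt).filter_mono nhdsWithin_le_nhds |>.and
      (Ioo_mem_nhdsLT hh0)).exists
  obtain ⟨a, ha, hle⟩ := exists_mem_resonantPotentials_integral_le hω hl0 hlh hωh
    (Nat.cast_ne_zero.1 hm0.ne')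
  rw [hTh] at ha hle
  exact ⟨a, ha, hle.trans_lt hl⟩

end PulseTrain

theorem stmt10_general (T ω : ℝ) (hT : 0 < T) (hω : 0 < ω) (m : ℕ) (hlo : (m - 2) * π ≤ ω * T)
    (hhi : ω * T < m * π) :
    (∀ ε > 0, ∃ a ∈ resonantPotentials T (ω ^ 2) m,
        (∫ x in 0..T, |a x - ω ^ 2|) < 2 * m * ω * cot (ω * T / (2 * m)) + ε) ∧
    sInf ((fun a : ℝ → ℝ => ∫ x in 0..T, |a x - ω ^ 2|) '' resonantPotentials T (ω ^ 2) m) =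
      2 * m * ω * cot (ω * T / (2 * m)) := by
  have hex : ∀ ε > 0, ∃ a ∈ resonantPotentials T (ω ^ 2) m,
      (∫ x in 0..T, |a x - ω ^ 2|) < 2 * m * ω * cot (ω * T / (2 * m)) + ε :=
    fun ε hε => exists_mem_resonantPotentials_integral_lt hT hω hhi hε
  refine ⟨hex, csInf_eq_of_forall_ge_of_forall_gt_exists_lt ?_ ?_ ?_⟩
  · obtain ⟨a, ha, -⟩ := hex 1 one_pos
    exact ⟨_, mem_image_of_mem _ ha⟩
  · rintro _ ⟨a, ha, rfl⟩
    exact mul_cot_le_integral_of_mem_resonantPotentials hT hω hlo hhi ha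
  · intro w hw
    obtain ⟨a, ha, hlt⟩ := hex (w - 2 * m * ω * cot (ω * T / (2 * m))) (sub_pos.2 hw)
    exact ⟨_, mem_image_of_mem _ ha, by linarith⟩

theorem lamT_eq_sq (T : ℝ) (n : ℕ) : lamT T n = ((2 * n - 1) * π / T) ^ 2 := by
  rw [lamT]; ring

theorem lambdaTildeN_eq_resonantPotentials (T : ℝ) (n : ℕ) :
    LambdaTildeN T n = resonantPotentials T (((2 * n - 1) * π / T) ^ 2) (2 * n + 1) := by
  have hodd : (-1 : ℝ) ^ (2 * n + 1) = -1 := Odd.neg_one_pow ⟨n, rfl⟩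
  simp only [LambdaTildeN, resonantPotentials, AntiperiodicSol, lamT_eq_sq, hodd, neg_one_mul,
    add_eq_zero_iff_eq_neg', and_assoc]

theorem betaT1_eq {T : ℝ} (hT : T ≠ 0) (n : ℕ) :
    betaT1 T n = 2 * (2 * n + 1 : ℕ) * ((2 * n - 1) * π / T) *
      cot ((2 * n - 1) * π / T * T / (2 * (2 * n + 1 : ℕ))) := by
  rw [betaT1, div_mul_cancel₀ _ hT]
  push_cast
  ring

theorem stmt10 (T : ℝ) (hT : 0 < T) (n : ℕ) (hn : 1 ≤ n) :
    (∀ ε > (0:ℝ), ∃ a ∈ LambdaTildeN T n,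
        (∫ x in (0:ℝ)..T, |a x - lamT T n|) < betaT1 T n + ε) ∧
    sInf ((fun a : ℝ → ℝ => ∫ x in (0:ℝ)..T, |a x - lamT T n|) '' LambdaTildeN T n) =
      betaT1 T n := by
  have hn' : (1 : ℝ) ≤ n := mod_cast hn
  have hω : 0 < (2 * n - 1) * π / T := div_pos (mul_pos (by linarith) pi_pos) hT
  have hωT : (2 * n - 1) * π / T * T = (2 * n - 1) * π := div_mul_cancel₀ _ hT.ne'
  rw [lambdaTildeN_eq_resonantPotentials, lamT_eq_sq, betaT1_eq hT.ne']
  exact stmt10_general T _ hT hω _ (by rw [hωT]; push_cast; linarith)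
    (by rw [hωT]; push_cast; linarith [pi_pos])
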